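/- Let μ be a Borel probability measure on Circle admitting a sequence (p_n)_{n≥0} of orthonormal Laurent polynomials; since (p_n) is a basis of the ℂ-vector space of Laurent polynomials, define the matrix C : ℕ×ℕ → ℂ by the (finite) expansions z·p_n(z) = Σ_k C_{n,k}·p_k(z) for z ≠ 0. Let r ∈ ℕ and let Ω : ℕ×ℕ → ℂ be a banded matrix. Then the following are equivalent: (i) there exist Laurent polynomials D_0, ..., D_r such that for every n ≥ 0 and every z ∈ ℂ with z ≠ 0, Σ_{k=0}^r D_k(z)·p_n^{(k)}(z) = Σ_m Ω_{n,m}·p_m(z); (ii) (ad C)^{r+1} Ω = 0, where C and Ω act as linear maps on sequences v : ℕ → ℂ by (A·v)_j = Σ_k A_{jk}·v_k (finite sums, the rows of C and Ω being finitely supported), (ad C)X := C∘X − X∘C, and (ad C)^{r+1} is its (r+1)-fold iterate. -/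

import Mathlib

/-!
Why the equivalence holds. The polynomials `p n` form a basis of the space `L = ℤ →₀ ℂ` of Laurent
polynomials, by triangularity with respect to the ordering `olpIdx` (`olp_linearIndependent`,
`olp_span`). Hence a sequence `v : ℕ → ℂ` is the same thing as the linear functional on `L` that
takes the value `v n` at `p n`, and a row-finite matrix `A` acts on sequences as the transpose of
the endomorphism `p n ↦ ∑ k, A n k p k` of `L` (`transposeOp_rowEnd`). Transposition is faithful and
reverses products, so the condition `(ad C)^{r+1} Ω = 0` says that `(commShift)^{r+1} S = 0`, where
`S` is the endomorphism attached to `Ω`, `commShift S = S M - M S`, and `M` is multiplication by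
`z`, the endomorphism attached to `C`.

Put `a m = z^{-m} S(z^m)` (`symb S m`). Then `commShift` acts on `a : ℤ → L` as the forward
difference operator followed by multiplication by `z` (`symb_commShift_iterate`), so the condition
becomes `Δ^{r+1} a = 0`. By Newton's interpolation formula (`fwdDiff_iter_eq_zero_iff`) this means
`a m = ∑_{k ≤ r} (m choose k) g k` for some `g k ∈ L`. As the `k`-th derivative of `z^m` is
`k! (m choose k) z^{m-k}`, this says exactly that `S` is the differential operator with
coefficients `D k = z^k g k / k!`.
-/

open MeasureTheory
open scoped ComplexConjugate

noncomputable section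

/-- The function associated to a Laurent polynomial given by its finitely
supported family of coefficients: `p(z) = Σ_{i ∈ ℤ} a_i z^i`. -/
def lval (a : ℤ →₀ ℂ) (z : ℂ) : ℂ := a.sum fun i c => c * z ^ i

/-- The ordering `1, z⁻¹, z, z⁻², z², …` of the monomials:
`σ(0) = 0`, `σ(2m) = m`, `σ(2m−1) = −m`. -/
def olpIdx (n : ℕ) : ℤ := if n % 2 = 0 then ((n / 2 : ℕ) : ℤ) else -(((n + 1) / 2 : ℕ) : ℤ)

/-- The Borel measurable structure on the unit circle. -/
instance : MeasurableSpace Circle := borel Circle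

instance : BorelSpace Circle := ⟨rfl⟩

/-- `p` is a sequence of orthonormal Laurent polynomials for the measure `μ` on the
unit circle: the `p n` are orthonormal in `L²(μ)`, `p n` is a linear combination of
the monomials `z^{σ(0)}, …, z^{σ(n)}`, and the coefficient of `z^{σ(n)}` is nonzero. -/
def IsOLP (μ : Measure Circle) (p : ℕ → (ℤ →₀ ℂ)) : Prop :=
  (∀ n k : ℕ, ∫ z : Circle, lval (p n) (z : ℂ) * conj (lval (p k) (z : ℂ)) ∂μ
      = if n = k then 1 else 0)
  ∧ (∀ n : ℕ, ∀ i ∈ (p n).support, i ∈ (Finset.range (n + 1)).image olpIdx)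
  ∧ (∀ n : ℕ, p n (olpIdx n) ≠ 0)

end

noncomputable section

/-! ### Laurent polynomials as functions -/

lemma lval_eq_linearCombination (a : ℤ →₀ ℂ) (z : ℂ) :
    lval a z = Finsupp.linearCombination ℂ (fun i : ℤ => z ^ i) a := by
  simp [lval, Finsupp.linearCombination_apply]

lemma lval_single (i : ℤ) (c z : ℂ) : lval (Finsupp.single i c) z = c * z ^ i := by
  simp [lval_eq_linearCombination]

/-- A Laurent polynomial is determined by its values: the characters `z ↦ z ^ i` of `ℂˣ` are
pairwise distinct, hence linearly independent. -/
lemma lval_injective {a b : ℤ →₀ ℂ} (h : ∀ z : ℂ, z ≠ 0 → lval a z = lval b z) : a = b := by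
  have hli := (linearIndependent_monoidHom ℂˣ ℂ).comp
    (fun i : ℤ => (Units.coeHom ℂ).comp (zpowGroupHom i : ℂˣ →* ℂˣ)) (by
      intro i j hij
      have h2 := DFunLike.congr_fun hij (Units.mk0 (2 : ℂ) two_ne_zero)
      simp only [MonoidHom.comp_apply, zpowGroupHom_apply, Units.coeHom_apply,
        Units.val_zpow_eq_zpow_val, Units.val_mk0] at h2
      have h3 : (2 : ℝ) ^ i = 2 ^ j := by
        apply Complex.ofReal_injective
        push_cast
        exact h2
      exact zpow_right_injective₀ (by norm_num) (by norm_num) h3)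
  refine hli ?_
  funext u
  have h1 := h u u.ne_zero
  rw [lval_eq_linearCombination, lval_eq_linearCombination] at h1
  simpa [Finsupp.linearCombination_apply, Finsupp.sum, Finset.sum_apply] using h1

/-- Multiplication by `z ^ j` on Laurent polynomials. -/
def lshift (j : ℤ) : (ℤ →₀ ℂ) →ₗ[ℂ] (ℤ →₀ ℂ) := Finsupp.lmapDomain ℂ ℂ (· + j)

lemma lshift_single (j i : ℤ) (c : ℂ) :
    lshift j (Finsupp.single i c) = Finsupp.single (i + j) c := by
  simp [lshift]

lemma lshift_lshift (i j : ℤ) (a : ℤ →₀ ℂ) : lshift i (lshift j a) = lshift (j + i) a := by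
  induction a using Finsupp.induction_linear with
  | zero => simp
  | add f g hf hg => simp [hf, hg]
  | single k c => simp [lshift_single, add_assoc]

lemma lshift_zero (a : ℤ →₀ ℂ) : lshift 0 a = a := by
  induction a using Finsupp.induction_linear with
  | zero => simp
  | add f g hf hg => simp [hf, hg]
  | single k c => simp [lshift_single]

lemma lshift_injective (j : ℤ) : Function.Injective (lshift j) := by
  intro a b h
  simpa [lshift_lshift, lshift_zero] using congrArg (lshift (-j)) h

lemma lval_lshift (j : ℤ) (a : ℤ →₀ ℂ) {z : ℂ} (hz : z ≠ 0) :
    lval (lshift j a) z = z ^ j * lval a z := by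
  simp only [lval_eq_linearCombination]
  induction a using Finsupp.induction_linear with
  | zero => simp
  | add f g hf hg => simp [hf, hg, mul_add]
  | single k c => simp [lshift_single, zpow_add₀ hz]; ring

lemma prod_sub_eq_factorial_mul_choose (m : ℤ) (k : ℕ) :
    ∏ i ∈ Finset.range k, ((m : ℂ) - i) = ((k.factorial * Ring.choose m k : ℤ) : ℂ) := by
  have h := Ring.descPochhammer_eq_factorial_smul_choose m k
  rw [← Polynomial.eval_eq_smeval, descPochhammer_eval_eq_prod_range, nsmul_eq_mul] at h
  rw [← h]
  push_cast
  rfl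

lemma iteratedDeriv_lval (k : ℕ) (a : ℤ →₀ ℂ) {z : ℂ} (hz : z ≠ 0) :
    iteratedDeriv k (lval a) z = Finsupp.linearCombination ℂ
      (fun i : ℤ => ((k.factorial * Ring.choose i k : ℤ) : ℂ) * z ^ (i - k)) a := by
  have h0 : lval a = fun z => ∑ i ∈ a.support, a i * z ^ i := rfl
  rw [h0, iteratedDeriv_fun_sum]
  · rw [Finsupp.linearCombination_apply, Finsupp.sum]
    refine Finset.sum_congr rfl fun i _ => ?_
    rw [iteratedDeriv_const_mul_field, iteratedDeriv_eq_iterate, iter_deriv_zpow,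
      prod_sub_eq_factorial_mul_choose, smul_eq_mul]
  · intro i _
    exact contDiffAt_const.mul
      (((analyticAt_id (𝕜 := ℂ) (z := z)).zpow hz (n := i)).contDiffAt)

/-! ### Newton interpolation on `ℤ` -/

/-- The functions on `ℤ` killed by the `n`-th power of the forward difference operator are the
combinations of the binomial coefficients `m ↦ m choose k` with `k < n`. -/
lemma fwdDiff_iter_eq_zero_iff {G : Type*} [AddCommGroup G] (n : ℕ) (f : ℤ → G) :
    (fwdDiff 1)^[n] f = 0 ↔
      ∃ g : ℕ → G, ∀ m, f m = ∑ k ∈ Finset.range n, Ring.choose m k • g k := by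
  induction n generalizing f with
  | zero => simp [funext_iff]
  | succ n ih =>
    have key : ∀ (g : ℕ → G) (m : ℤ),
        ∑ k ∈ Finset.range (n + 1), Ring.choose (m + 1) k • g k
          - ∑ k ∈ Finset.range (n + 1), Ring.choose m k • g k
          = ∑ k ∈ Finset.range n, Ring.choose m k • g (k + 1) := by
      intro g m
      rw [Finset.sum_range_succ', Finset.sum_range_succ']
      simp only [Ring.choose_succ_succ, Ring.choose_zero_right, add_smul, Finset.sum_add_distrib]
      abel
    rw [Function.iterate_succ_apply, ih]
    constructor
    · rintro ⟨g, hg⟩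
      set g' : ℕ → G := fun k => Nat.casesOn k (f 0) g with hg'
      refine ⟨g', ?_⟩
      -- both sides agree at `0` and have the same forward difference
      have hstep : ∀ m : ℤ, f (m + 1) - f m
          = ∑ k ∈ Finset.range (n + 1), Ring.choose (m + 1) k • g' k
          - ∑ k ∈ Finset.range (n + 1), Ring.choose m k • g' k := by
        intro m
        rw [key]
        exact hg m
      intro m
      induction m using Int.induction_on with
      | zero => simp [Finset.sum_range_succ', hg']
      | succ i hi =>
        have := hstep i
        rw [← hi] at this
        exact sub_left_injective this
      | pred i hi =>
        have := hstep (-i - 1)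
        rw [sub_add_cancel, ← hi] at this
        exact sub_right_injective this
    · rintro ⟨g, hg⟩
      refine ⟨fun k => g (k + 1), fun m => ?_⟩
      rw [← key g m, ← hg, ← hg]
      rfl

/-! ### Differential operators and commutators with multiplication by `z` -/

/-- The commutator `S M - M S`, where `M = lshift 1` is multiplication by `z`. -/
def commShift (S : (ℤ →₀ ℂ) →ₗ[ℂ] (ℤ →₀ ℂ)) : (ℤ →₀ ℂ) →ₗ[ℂ] (ℤ →₀ ℂ) :=
  S ∘ₗ lshift 1 - lshift 1 ∘ₗ S

/-- The sequence `m ↦ z^{-m} S(z^m)`, which determines the endomorphism `S`. -/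
def symb (S : (ℤ →₀ ℂ) →ₗ[ℂ] (ℤ →₀ ℂ)) (m : ℤ) : ℤ →₀ ℂ :=
  lshift (-m) (S (Finsupp.single m 1))

lemma apply_single_eq_lshift_symb (S : (ℤ →₀ ℂ) →ₗ[ℂ] (ℤ →₀ ℂ)) (m : ℤ) :
    S (Finsupp.single m 1) = lshift m (symb S m) := by
  simp [symb, lshift_lshift, lshift_zero]

lemma symb_eq_zero_iff (S : (ℤ →₀ ℂ) →ₗ[ℂ] (ℤ →₀ ℂ)) : symb S = 0 ↔ S = 0 := by
  constructor
  · intro h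
    refine Finsupp.lhom_ext' fun m => LinearMap.ext_ring ?_
    simp [apply_single_eq_lshift_symb, h]
  · rintro rfl
    funext m
    simp [symb]

lemma symb_commShift (S : (ℤ →₀ ℂ) →ₗ[ℂ] (ℤ →₀ ℂ)) (m : ℤ) :
    symb (commShift S) m = lshift 1 (fwdDiff 1 (symb S) m) := by
  simp only [symb, commShift, fwdDiff, LinearMap.sub_apply, LinearMap.comp_apply, lshift_single,
    map_sub, lshift_lshift]
  congr 3 <;> ring

lemma symb_commShift_iterate (n : ℕ) (S : (ℤ →₀ ℂ) →ₗ[ℂ] (ℤ →₀ ℂ)) (m : ℤ) :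
    symb (commShift^[n] S) m = lshift n ((fwdDiff 1)^[n] (symb S) m) := by
  induction n generalizing m with
  | zero => simp [lshift_zero]
  | succ n ih =>
    rw [Function.iterate_succ_apply', Function.iterate_succ_apply', symb_commShift]
    simp only [fwdDiff, ih, ← map_sub, lshift_lshift]
    push_cast
    rfl

/-- An endomorphism of the space of Laurent polynomials is a differential operator of order at most
`r` with Laurent polynomial coefficients if and only if it is killed by the `(r + 1)`-st iterated
commutator with multiplication by `z`. -/
lemma exists_diffOp_iff (r : ℕ) (S : (ℤ →₀ ℂ) →ₗ[ℂ] (ℤ →₀ ℂ)) :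
    (∃ D : ℕ → (ℤ →₀ ℂ), ∀ q : ℤ →₀ ℂ, ∀ z : ℂ, z ≠ 0 →
        ∑ k ∈ Finset.range (r + 1), lval (D k) z * iteratedDeriv k (lval q) z = lval (S q) z)
      ↔ commShift^[r + 1] S = 0 := by
  have hcomm : commShift^[r + 1] S = 0 ↔ (fwdDiff 1)^[r + 1] (symb S) = 0 := by
    rw [← symb_eq_zero_iff, funext_iff, funext_iff]
    refine forall_congr' fun m => ?_
    rw [symb_commShift_iterate]
    exact map_eq_zero_iff _ (lshift_injective _)
  rw [hcomm, fwdDiff_iter_eq_zero_iff]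
  -- value at `z` of the Newton expansion with coefficients `k! z^{-k} D k`, multiplied by `z^m`
  have hval : ∀ (D g : ℕ → (ℤ →₀ ℂ)), (∀ k, g k = (k.factorial : ℂ) • lshift (-k) (D k)) →
      ∀ (m : ℤ) (z : ℂ), z ≠ 0 →
      lval (lshift m (∑ k ∈ Finset.range (r + 1), Ring.choose m k • g k)) z
        = ∑ k ∈ Finset.range (r + 1), lval (D k) z *
            (((k.factorial * Ring.choose m k : ℤ) : ℂ) * z ^ (m - k)) := by
    intro D g hg m z hz
    rw [lval_lshift _ _ hz, lval_eq_linearCombination, map_sum, Finset.mul_sum]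
    refine Finset.sum_congr rfl fun k _ => ?_
    rw [hg, map_zsmul, map_smul, ← lval_eq_linearCombination, lval_lshift _ _ hz, zsmul_eq_mul,
      smul_eq_mul, sub_eq_add_neg, zpow_add₀ hz]
    push_cast
    ring
  constructor
  · rintro ⟨D, hD⟩
    refine ⟨fun k => (k.factorial : ℂ) • lshift (-k) (D k), fun m => lshift_injective m ?_⟩
    rw [← apply_single_eq_lshift_symb]
    refine lval_injective fun z hz => ?_
    rw [hval D _ (fun k => rfl) m z hz, ← hD _ z hz]
    simp [iteratedDeriv_lval _ _ hz]
  · rintro ⟨g, hg⟩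
    have hD : ∀ k, g k = (k.factorial : ℂ) •
        lshift (-k) ((k.factorial : ℂ)⁻¹ • lshift k (g k)) := by
      intro k
      have : (k.factorial : ℂ) ≠ 0 := by exact_mod_cast k.factorial_ne_zero
      simp [lshift_lshift, lshift_zero, smul_smul, this]
    refine ⟨fun k => (k.factorial : ℂ)⁻¹ • lshift k (g k), fun q z hz => ?_⟩
    have hmono : ∀ m : ℤ, lval (S (Finsupp.single m 1)) z = _ := fun m => by
      rw [apply_single_eq_lshift_symb, hg m, hval _ g hD m z hz]
    simp only [iteratedDeriv_lval _ _ hz]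
    induction q using Finsupp.induction_linear with
    | zero => simp [lval_eq_linearCombination]
    | add a b ha hb =>
      simp only [map_add, mul_add, Finset.sum_add_distrib, ha, hb]
      simp only [lval_eq_linearCombination, map_add]
    | single m c =>
      have h1 : Finsupp.single m c = c • Finsupp.single m (1 : ℂ) := by simp
      have h2 : lval (S (Finsupp.single m c)) z = c * lval (S (Finsupp.single m 1)) z := by
        rw [h1, map_smul, lval_eq_linearCombination, map_smul, ← lval_eq_linearCombination,
          smul_eq_mul]
      rw [h2, hmono, Finset.mul_sum]
      refine Finset.sum_congr rfl fun k _ => ?_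
      simp only [Finsupp.linearCombination_single, smul_eq_mul]
      ring

/-! ### Orthonormal Laurent polynomials form a basis -/

lemma olpIdx_injective : Function.Injective olpIdx := by
  intro m n h
  unfold olpIdx at h
  split_ifs at h <;> omega

lemma olpIdx_surjective : Function.Surjective olpIdx := by
  intro i
  rcases le_or_gt 0 i with hi | hi
  · refine ⟨2 * i.toNat, ?_⟩
    unfold olpIdx
    split_ifs <;> omega
  · refine ⟨2 * (-i).toNat - 1, ?_⟩
    unfold olpIdx
    split_ifs <;> omega

lemma olp_linearIndependent {p : ℕ → (ℤ →₀ ℂ)}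
    (hsupp : ∀ n : ℕ, ∀ i ∈ (p n).support, i ∈ (Finset.range (n + 1)).image olpIdx)
    (hlead : ∀ n : ℕ, p n (olpIdx n) ≠ 0) : LinearIndependent ℂ p := by
  rw [linearIndependent_iff]
  intro l hl
  by_contra hne
  have hs : l.support.Nonempty := Finsupp.support_nonempty_iff.mpr hne
  -- only the last `p N` occurring in the combination has a monomial of index `olpIdx N`
  set N := l.support.max' hs with hN
  have h1 := DFunLike.congr_fun hl (olpIdx N)
  rw [Finsupp.linearCombination_apply, Finsupp.sum, Finsupp.finsetSum_apply,
    Finset.sum_eq_single N] at h1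
  · have h2 : l N ≠ 0 := Finsupp.mem_support_iff.mp (l.support.max'_mem hs)
    simp [h2, hlead N] at h1
  · intro n hn hnN
    have hlt : n < N := lt_of_le_of_ne (l.support.le_max' n hn) hnN
    have : p n (olpIdx N) = 0 := by
      by_contra h0
      have := hsupp n _ (Finsupp.mem_support_iff.mpr h0)
      obtain ⟨j, hj, hjN⟩ := Finset.mem_image.mp this
      have := olpIdx_injective hjN
      rw [Finset.mem_range] at hj
      omega
    simp [this]
  · intro h
    exact absurd (l.support.max'_mem hs) h

lemma olp_span {p : ℕ → (ℤ →₀ ℂ)}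
    (hsupp : ∀ n : ℕ, ∀ i ∈ (p n).support, i ∈ (Finset.range (n + 1)).image olpIdx)
    (hlead : ∀ n : ℕ, p n (olpIdx n) ≠ 0) : ⊤ ≤ Submodule.span ℂ (Set.range p) := by
  have hmono : ∀ n : ℕ, Finsupp.single (olpIdx n) (1 : ℂ) ∈ Submodule.span ℂ (Set.range p) := by
    intro n
    induction n using Nat.strong_induction_on with
    | _ n ih =>
      have hmem : olpIdx n ∈ (p n).support := Finsupp.mem_support_iff.mpr (hlead n)
      have h1 : p n = p n (olpIdx n) • Finsupp.single (olpIdx n) (1 : ℂ)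
          + ∑ i ∈ (p n).support.erase (olpIdx n), p n i • Finsupp.single i (1 : ℂ) := by
        rw [Finset.add_sum_erase _ (fun i => p n i • Finsupp.single i (1 : ℂ)) hmem]
        conv_lhs => rw [← Finsupp.sum_single (p n)]
        simp [Finsupp.sum]
      have h2 : ∑ i ∈ (p n).support.erase (olpIdx n), p n i • Finsupp.single i (1 : ℂ)
          ∈ Submodule.span ℂ (Set.range p) := by
        refine Submodule.sum_mem _ fun i hi => Submodule.smul_mem _ _ ?_
        obtain ⟨hne, hi⟩ := Finset.mem_erase.mp hi
        obtain ⟨j, hj, rfl⟩ := Finset.mem_image.mp (hsupp n i hi)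
        rw [Finset.mem_range] at hj
        refine ih j (lt_of_le_of_ne (by omega) ?_)
        rintro rfl
        exact hne rfl
      have h3 : Finsupp.single (olpIdx n) (1 : ℂ) = (p n (olpIdx n))⁻¹ • (p n
          - ∑ i ∈ (p n).support.erase (olpIdx n), p n i • Finsupp.single i (1 : ℂ)) := by
        rw [eq_inv_smul_iff₀ (hlead n), eq_sub_iff_add_eq]
        exact h1.symm
      rw [h3]
      exact Submodule.smul_mem _ _
        (Submodule.sub_mem _ (Submodule.subset_span (Set.mem_range_self n)) h2)
  intro q _
  rw [← Finsupp.sum_single q]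
  refine Submodule.sum_mem _ fun i _ => ?_
  obtain ⟨n, rfl⟩ := olpIdx_surjective i
  rw [← mul_one (q (olpIdx n)), ← smul_eq_mul, ← Finsupp.smul_single]
  exact Submodule.smul_mem _ _ (hmono n)

/-! ### Matrices acting on sequences as transposes of endomorphisms -/

section Transpose

variable {V : Type*} [AddCommGroup V] [Module ℂ V]

/-- The action of the transpose of `S` on sequences, a sequence `v` being identified with the linear
functional that takes the value `v n` at the basis vector `b n`. -/
def transposeOp (b : Module.Basis ℕ ℂ V) (S : V →ₗ[ℂ] V) (v : ℕ → ℂ) (j : ℕ) : ℂ :=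
  b.constr ℂ v (S (b j))

lemma constr_transposeOp (b : Module.Basis ℕ ℂ V) (S : V →ₗ[ℂ] V) (v : ℕ → ℂ) :
    b.constr ℂ (transposeOp b S v) = b.constr ℂ v ∘ₗ S :=
  b.ext fun j => by simp [transposeOp, Module.Basis.constr_basis]

lemma transposeOp_comp (b : Module.Basis ℕ ℂ V) (S T : V →ₗ[ℂ] V) :
    transposeOp b S ∘ transposeOp b T = transposeOp b (T ∘ₗ S) := by
  funext v j
  simp only [Function.comp_apply]
  rw [transposeOp, constr_transposeOp]
  rfl

lemma transposeOp_sub (b : Module.Basis ℕ ℂ V) (S T : V →ₗ[ℂ] V) :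
    transposeOp b (S - T) = transposeOp b S - transposeOp b T := by
  funext v j
  simp [transposeOp]

lemma transposeOp_eq_zero_iff (b : Module.Basis ℕ ℂ V) (S : V →ₗ[ℂ] V) :
    transposeOp b S = 0 ↔ S = 0 := by
  constructor
  · intro h
    refine b.ext fun j => b.repr.injective (Finsupp.ext fun k => ?_)
    -- the functional attached to a unit sequence is a coordinate functional
    have h1 : b.constr ℂ (fun n => if n = k then (1 : ℂ) else 0) = b.coord k :=
      b.ext fun n => by simp [Module.Basis.constr_basis, Finsupp.single_apply]
    have h2 := congrFun (congrFun h (fun n => if n = k then (1 : ℂ) else 0)) j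
    rw [transposeOp, h1] at h2
    simpa using h2
  · rintro rfl
    funext v j
    simp [transposeOp]

/-- The endomorphism `b n ↦ ∑ k, A n k • b k` attached to a row-finite matrix `A`. -/
def rowEnd (b : Module.Basis ℕ ℂ V) (A : ℕ → ℕ → ℂ) (hA : ∀ n, {k | A n k ≠ 0}.Finite) :
    V →ₗ[ℂ] V :=
  b.constr ℂ fun n => ∑ k ∈ (hA n).toFinset, A n k • b k

lemma tsum_row {A : ℕ → ℕ → ℂ} (hA : ∀ n, {k | A n k ≠ 0}.Finite) (n : ℕ) (v : ℕ → ℂ) :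
    ∑' k, A n k * v k = ∑ k ∈ (hA n).toFinset, A n k * v k :=
  tsum_eq_sum fun k hk => by
    have : A n k = 0 := by simpa using hk
    simp [this]

lemma transposeOp_rowEnd (b : Module.Basis ℕ ℂ V) {A : ℕ → ℕ → ℂ}
    (hA : ∀ n, {k | A n k ≠ 0}.Finite) :
    transposeOp b (rowEnd b A hA) = fun v j => ∑' k, A j k * v k := by
  funext v j
  rw [tsum_row hA]
  simp [transposeOp, rowEnd, Module.Basis.constr_basis]

end Transpose

lemma lval_rowEnd (b : Module.Basis ℕ ℂ (ℤ →₀ ℂ)) {A : ℕ → ℕ → ℂ}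
    (hA : ∀ n, {k | A n k ≠ 0}.Finite) (n : ℕ) (z : ℂ) :
    lval (rowEnd b A hA (b n)) z = ∑' k, A n k * lval (b k) z := by
  rw [tsum_row hA]
  simp [rowEnd, Module.Basis.constr_basis, lval_eq_linearCombination]

end

/-- The CMV ad-conditions characterize the banded matrices `Ω` such that
`D x = Ω x` for some linear differential operator `D` of order at most `r`. -/
theorem olp_ad_conditions_iff
    (μ : Measure Circle) (hμ : IsProbabilityMeasure μ)
    (p : ℕ → (ℤ →₀ ℂ)) (hp : IsOLP μ p)
    (C : ℕ → ℕ → ℂ) (hCfin : ∀ n : ℕ, {k : ℕ | C n k ≠ 0}.Finite)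
    (hC : ∀ n : ℕ, ∀ z : ℂ, z ≠ 0 →
      z * lval (p n) z = ∑' k, C n k * lval (p k) z)
    (r : ℕ) (Ω : ℕ → ℕ → ℂ)
    (hband : ∃ s : ℕ, ∀ j k : ℕ, (k + s < j ∨ j + s < k) → Ω j k = 0) :
    (∃ D : ℕ → (ℤ →₀ ℂ), ∀ n : ℕ, ∀ z : ℂ, z ≠ 0 →
        ∑ k ∈ Finset.range (r + 1), lval (D k) z * iteratedDeriv k (lval (p n)) z
          = ∑' m, Ω n m * lval (p m) z)
      ↔ (fun X : (ℕ → ℂ) → (ℕ → ℂ) =>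
            ((fun v : ℕ → ℂ => fun j => ∑' k, C j k * v k) ∘ X)
              - (X ∘ fun v : ℕ → ℂ => fun j => ∑' k, C j k * v k))^[r + 1]
          (fun v : ℕ → ℂ => fun j => ∑' k, Ω j k * v k) = 0 := by
  obtain ⟨-, hsupp, hlead⟩ := hp
  set b : Module.Basis ℕ ℂ (ℤ →₀ ℂ) :=
    Module.Basis.mk (olp_linearIndependent hsupp hlead) (olp_span hsupp hlead)
  have hb : ∀ n, b n = p n := fun n => by simp [b]
  have hΩfin : ∀ n : ℕ, {k : ℕ | Ω n k ≠ 0}.Finite := by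
    obtain ⟨s, hs⟩ := hband
    intro n
    refine (Set.finite_Iic (n + s)).subset fun k hk => ?_
    by_contra hlt
    exact hk (hs n k (Or.inr (by simpa using hlt)))
  have hM : rowEnd b C hCfin = lshift 1 := by
    refine b.ext fun n => lval_injective fun z hz => ?_
    rw [lval_rowEnd, lval_lshift _ _ hz, zpow_one]
    simp only [hb]
    exact (hC n z hz).symm
  rw [← transposeOp_rowEnd b hCfin, ← transposeOp_rowEnd b hΩfin, hM]
  set S := rowEnd b Ω hΩfin
  have hiter : ∀ n : ℕ, (fun X : (ℕ → ℂ) → (ℕ → ℂ) =>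
      (transposeOp b (lshift 1) ∘ X) - (X ∘ transposeOp b (lshift 1)))^[n] (transposeOp b S)
        = transposeOp b (commShift^[n] S) := by
    intro n
    induction n with
    | zero => rfl
    | succ n ih =>
      rw [Function.iterate_succ_apply', Function.iterate_succ_apply', ih, transposeOp_comp,
        transposeOp_comp, ← transposeOp_sub]
      rfl
  have hrw := hiter (r + 1)
  refine Iff.trans ?_ (Iff.trans (Iff.trans (exists_diffOp_iff r S)
    (transposeOp_eq_zero_iff b _).symm) (by rw [← hrw]))
  refine exists_congr fun D => ⟨fun h q z hz => ?_, fun h n z hz => ?_⟩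
  · -- both sides are linear in `q`, and they agree on the basis `p`
    have hlin : ∑ k ∈ Finset.range (r + 1), lval (D k) z • Finsupp.linearCombination ℂ
        (fun i : ℤ => ((k.factorial * Ring.choose i k : ℤ) : ℂ) * z ^ (i - k))
        = Finsupp.linearCombination ℂ (fun i : ℤ => z ^ i) ∘ₗ S := by
      refine b.ext fun n => ?_
      have h1 := h n z hz
      simp only [← hb] at h1
      rw [← lval_rowEnd b hΩfin] at h1
      simpa [iteratedDeriv_lval _ _ hz, lval_eq_linearCombination] using h1
    have h2 := LinearMap.congr_fun hlin q
    simpa [iteratedDeriv_lval _ _ hz, lval_eq_linearCombination] using h2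
  · have h1 := h (b n) z hz
    rw [lval_rowEnd b hΩfin] at h1
    simpa only [hb] using h1
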